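/- arXiv:2304.14990 — 5 statements merged into one kernel-verified Lean document; each statement's English description precedes it below -/
import Mathlib

section
/- For every finite Stackelberg game (u_l, u_f) with m ≥ 1 leader actions and n ≥ 1 follower actions, utilities valued in [0,1], and every δ > 0, the supremum sup_{x ∈ Δ^m} min_{j ∈ BR_δ(x)} u_l(x, j) is attained: there exists a leader mixed strategy x* ∈ Δ^m such that min_{j ∈ BR_δ(x*)} u_l(x*, j) = sup_{x ∈ Δ^m} min_{j ∈ BR_δ(x)} u_l(x, j). In particular, a δ-robust Stackelberg equilibrium (a pair (x*, j*) with j* ∈ argmin_{j ∈ BR_δ(x*)} u_l(x*, j)) exists in every game for any δ > 0. -/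
open Finset Set

noncomputable section

/-- The simplex of mixed strategies over `m` actions. -/
def simplex (m : ℕ) : Set (Fin m → ℝ) := stdSimplex ℝ (Fin m)

/-- Mixed-strategy extension of a utility matrix: `u(x, j) = ∑ i, x i * u i j`. -/
def mixU {m n : ℕ} (u : Fin m → Fin n → ℝ) (x : Fin m → ℝ) (j : Fin n) : ℝ :=
  ∑ i, x i * u i j

/-- The follower's δ-optimal response set (strict inequality):
`BR_δ(x) = {j : u_f(x,j) > max_{j'} u_f(x,j') - δ}`. -/
def BRd {m n : ℕ} (uf : Fin m → Fin n → ℝ) (δ : ℝ) (x : Fin m → ℝ) : Set (Fin n) :=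
  {j | mixU uf x j > (⨆ j', mixU uf x j') - δ}

/-- The follower's exact best-response set. -/
def BR0 {m n : ℕ} (uf : Fin m → Fin n → ℝ) (x : Fin m → ℝ) : Set (Fin n) :=
  {j | mixU uf x j = ⨆ j', mixU uf x j'}

/-- Worst-case leader utility over the follower's δ-optimal response set:
`min_{j ∈ BR_δ(x)} u_l(x, j)`. -/
def valBR {m n : ℕ} (ul uf : Fin m → Fin n → ℝ) (δ : ℝ) (x : Fin m → ℝ) : ℝ :=
  sInf (mixU ul x '' BRd uf δ x)

/-- The δ-RSE leader utility `u_RSE(δ) = sup_{x ∈ Δ^m} min_{j ∈ BR_δ(x)} u_l(x, j)`. -/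
def uRSE {m n : ℕ} (ul uf : Fin m → Fin n → ℝ) (δ : ℝ) : ℝ :=
  sSup (valBR ul uf δ '' simplex m)

/-- The SSE leader utility `u_SSE = sup_{x ∈ Δ^m} max_{j ∈ BR_0(x)} u_l(x, j)`. -/
def uSSE {m n : ℕ} (ul uf : Fin m → Fin n → ℝ) : ℝ :=
  sSup ((fun x => sSup (mixU ul x '' BR0 uf x)) '' simplex m)

/-- The maximin leader utility `u_MM = sup_{x ∈ Δ^m} min_{j ∈ [n]} u_l(x, j)`. -/
def uMM {m n : ℕ} (ul : Fin m → Fin n → ℝ) : ℝ :=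
  sSup ((fun x => ⨅ j, mixU ul x j) '' simplex m)

/-- The inducibility gap
`Δ = min_{j} sup_{x ∈ Δ^m} min_{j' ≠ j} (u_f(x, j) - u_f(x, j'))`. -/
def indGap {m n : ℕ} (uf : Fin m → Fin n → ℝ) : ℝ :=
  ⨅ j, sSup ((fun x => ⨅ j' : {k : Fin n // k ≠ j}, (mixU uf x j - mixU uf x j'.1)) '' simplex m)

/-!
Since `δ > 0` and the inequality defining a `δ`-optimal response is strict, an action that is
`δ`-optimal at `x` stays `δ`-optimal near `x`. The response set can therefore only grow under small
perturbations, so the minimum of the leader's utility over it is upper semicontinuous in `x`, and an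
upper semicontinuous function attains its maximum on a compact set.
-/

open Topology

variable {X γ ι : Type*}

/-- The `δ`-optimal responses of a follower whose utility for the action `i` is `f i`. The supremum
is meaningful only for `f` bounded above: otherwise it has the junk value `0`. -/
def approxMaximizers (δ : ℝ) (f : ι → ℝ) : Set ι :=
  {j | f j > (⨆ i, f i) - δ}

/-- The leader's worst-case utility when the leader's and the follower's utilities for the follower
action `i` are `v i` and `f i`, and the follower may answer with any `δ`-optimal response. -/
def robustValue [InfSet γ] (δ : ℝ) (v : ι → γ) (f : ι → ℝ) : γ :=
  sInf (v '' approxMaximizers δ f)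

section approxMaximizers

variable [Finite ι] [Nonempty ι] {δ : ℝ}

theorem mem_approxMaximizers_iff {f : ι → ℝ} {j : ι} :
    j ∈ approxMaximizers δ f ↔ ∀ i, f i - δ < f j := by
  refine ⟨fun hj i => ?_, fun hj => ?_⟩
  · exact (sub_le_sub_right (le_ciSup (Set.finite_range f).bddAbove i) δ).trans_lt hj
  · obtain ⟨k, hk⟩ := exists_eq_ciSup_of_finite (f := f)
    change (⨆ i, f i) - δ < f j
    exact hk ▸ hj k

theorem approxMaximizers_nonempty (hδ : 0 < δ) (f : ι → ℝ) : (approxMaximizers δ f).Nonempty := by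
  obtain ⟨k, hk⟩ := exists_eq_ciSup_of_finite (f := f)
  exact ⟨k, (sub_lt_self _ hδ).trans_eq hk.symm⟩

theorem eventually_mem_approxMaximizers [TopologicalSpace X] {f : X → ι → ℝ} {K : Set X} {x : X}
    (hf : ∀ i, ContinuousWithinAt (f · i) K x) {j : ι} (hj : j ∈ approxMaximizers δ (f x)) :
    ∀ᶠ z in 𝓝[K] x, j ∈ approxMaximizers δ (f z) := by
  simp only [mem_approxMaximizers_iff, Filter.eventually_all] at hj ⊢
  exact fun i => ((hf i).sub_const δ).eventually_lt (hf j) (hj i)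

end approxMaximizers

section ConditionallyCompleteLinearOrder

variable [ConditionallyCompleteLinearOrder γ]

theorem exists_eq_robustValue [Finite ι] [Nonempty ι] {δ : ℝ} (hδ : 0 < δ) (v : ι → γ)
    (f : ι → ℝ) : ∃ j ∈ approxMaximizers δ f, v j = robustValue δ v f :=
  ((approxMaximizers_nonempty hδ f).image v).csInf_mem (Set.toFinite _)

/-- One half of Berge's maximum theorem, for a correspondence into a discrete space. -/
theorem upperSemicontinuousOn_sInf_image [TopologicalSpace X] {K : Set X} {S : X → Set ι}
    {v : X → ι → γ} (hS_nonempty : ∀ x ∈ K, (S x).Nonempty)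
    (hS_bdd : ∀ x ∈ K, BddBelow (v x '' S x))
    (hS_eventually : ∀ x ∈ K, ∀ j ∈ S x, ∀ᶠ z in 𝓝[K] x, j ∈ S z)
    (hv : ∀ j, UpperSemicontinuousOn (v · j) K) :
    UpperSemicontinuousOn (fun x => sInf (v x '' S x)) K := by
  intro x hx y hy
  obtain ⟨_, ⟨j, hj, rfl⟩, hjy⟩ :=
    (csInf_lt_iff (hS_bdd x hx) ((hS_nonempty x hx).image _)).1 hy
  filter_upwards [hS_eventually x hx j hj, hv j x hx y hjy, self_mem_nhdsWithin] with z hzS hzy hzK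
  exact (csInf_le (hS_bdd z hzK) (Set.mem_image_of_mem _ hzS)).trans_lt hzy

theorem upperSemicontinuousOn_robustValue [TopologicalSpace X] [Finite ι] [Nonempty ι] {K : Set X}
    {v : X → ι → γ} {f : X → ι → ℝ} {δ : ℝ} (hδ : 0 < δ)
    (hv : ∀ j, UpperSemicontinuousOn (v · j) K) (hf : ∀ j, ContinuousOn (f · j) K) :
    UpperSemicontinuousOn (fun x => robustValue δ (v x) (f x)) K :=
  upperSemicontinuousOn_sInf_image (fun x _ => approxMaximizers_nonempty hδ (f x))
    (fun _ _ => (Set.toFinite _).bddBelow)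
    (fun x hx _ hj => eventually_mem_approxMaximizers (fun i => hf i x hx) hj) hv

theorem exists_eq_sSup_image_of_upperSemicontinuousOn [TopologicalSpace X] {K : Set X}
    (hK : IsCompact K) (hK_nonempty : K.Nonempty) {g : X → γ} (hg : UpperSemicontinuousOn g K) :
    ∃ x ∈ K, g x = sSup (g '' K) := by
  obtain ⟨x, hx, hmax⟩ := hg.exists_isMaxOn hK_nonempty hK
  have hgreatest : IsGreatest (g '' K) (g x) :=
    ⟨Set.mem_image_of_mem g hx, Set.forall_mem_image.2 hmax⟩
  exact ⟨x, hx, hgreatest.csSup_eq.symm⟩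

theorem rse_exists_general [TopologicalSpace X] [Finite ι] [Nonempty ι] {K : Set X}
    (hK : IsCompact K) (hK_nonempty : K.Nonempty) {v : X → ι → γ} {f : X → ι → ℝ} {δ : ℝ}
    (hδ : 0 < δ) (hv : ∀ j, UpperSemicontinuousOn (v · j) K) (hf : ∀ j, ContinuousOn (f · j) K) :
    ∃ x ∈ K,
      robustValue δ (v x) (f x) = sSup ((fun z => robustValue δ (v z) (f z)) '' K) ∧
      ∃ j ∈ approxMaximizers δ (f x), v x j = robustValue δ (v x) (f x) := by
  obtain ⟨x, hx, hsup⟩ := exists_eq_sSup_image_of_upperSemicontinuousOn hK hK_nonempty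
    (upperSemicontinuousOn_robustValue hδ hv hf)
  exact ⟨x, hx, hsup, exists_eq_robustValue hδ (v x) (f x)⟩

end ConditionallyCompleteLinearOrder

theorem continuous_mixU {m n : ℕ} (u : Fin m → Fin n → ℝ) (j : Fin n) :
    Continuous (mixU u · j) := by
  unfold mixU
  fun_prop

/-- existence of a δ-RSE. -/
theorem rse_exists (m n : ℕ) (hm : 1 ≤ m) (hn : 1 ≤ n)
    (ul uf : Fin m → Fin n → ℝ)
    (hul : ∀ i j, ul i j ∈ Set.Icc (0:ℝ) 1) (huf : ∀ i j, uf i j ∈ Set.Icc (0:ℝ) 1)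
    (δ : ℝ) (hδ : 0 < δ) :
    ∃ x ∈ simplex m,
      valBR ul uf δ x = sSup (valBR ul uf δ '' simplex m) ∧
      ∃ j ∈ BRd uf δ x, mixU ul x j = valBR ul uf δ x := by
  have : Nonempty (Fin n) := ⟨⟨0, hn⟩⟩
  exact rse_exists_general (isCompact_stdSimplex ℝ (Fin m))
    ⟨_, single_mem_stdSimplex ℝ ⟨0, hm⟩⟩ hδ
    (fun j => (continuous_mixU ul j).upperSemicontinuous.upperSemicontinuousOn _)
    (fun j => (continuous_mixU uf j).continuousOn)
end
end

section
/- Let (u_l, u_f) be a finite Stackelberg game with m = 2 leader actions, n ≥ 2 follower actions, utilities in [0,1], and inducibility gap Δ > 0. Then the function δ ↦ u_RSE(δ) is convex on the interval (0, Δ). -/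
open Finset Set

noncomputable section

/-!
For two leader actions a mixed strategy is a point `t ∈ [0, 1]` and every follower payoff is an
affine function of `t`. A positive inducibility margin forces the slopes of these functions to be
distinct and lets every action be the unique best response somewhere. Hence each action `j` has an
interval of strategies inducing it with margin `δ`, whose endpoints move affinely with `δ`, and only
actions with adjacent slopes can be near-optimal at the same strategy.

Convexity is proved by placing an affine minorant of `u_RSE` above every attained value.
If `j` is the only response at `t`, the leader gains by moving to an endpoint of the interval of
`j`, and the payoff there is affine in `δ`. If two adjacent actions `j` and `k` respond, either an
endpoint bordering the gap between their intervals is as good, or the leader's payoffs against `j`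
and `k` cross as a peak; the height of the peak is then a constant minorant.
-/

section AffineMinorant

variable {E : Type*} [AddCommGroup E] [Module ℝ E]

/-- Some affine minorant of `f` on `s` is at least `c` at `x`. -/
def AffinelyMinorized (f : E → ℝ) (s : Set E) (x : E) (c : ℝ) : Prop :=
  ∃ g : E →ᵃ[ℝ] ℝ, c ≤ g x ∧ ∀ y ∈ s, g y ≤ f y

lemma convexOn_of_affinelyMinorized {f : E → ℝ} {s : Set E} (hs : Convex ℝ s)
    (hf : ∀ x ∈ s, ∀ c < f x, AffinelyMinorized f s x c) : ConvexOn ℝ s f := by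
  refine ⟨hs, fun x hx y hy a b ha hb hab => le_of_forall_lt_imp_le_of_dense fun c hc => ?_⟩
  obtain ⟨g, hcg, hgf⟩ := hf _ (hs hx hy ha hb hab) c hc
  calc c ≤ g (a • x + b • y) := hcg
    _ = a • g x + b • g y := Convex.combo_affine_apply hab
    _ ≤ a • f x + b • f y :=
      add_le_add (smul_le_smul_of_nonneg_left (hgf x hx) ha)
        (smul_le_smul_of_nonneg_left (hgf y hy) hb)

end AffineMinorant

lemma mul_nonneg_of_mul_nonneg_of_mul_nonneg {R : Type*} [CommRing R] [LinearOrder R]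
    [IsStrictOrderedRing R] {a b c : R} (hc : c ≠ 0) (ha : 0 ≤ a * c) (hb : 0 ≤ b * c) :
    0 ≤ a * b := by
  refine nonneg_of_mul_nonneg_left (b := c * c) ?_ (mul_self_pos.2 hc)
  rw [mul_mul_mul_comm]
  exact mul_nonneg ha hb

lemma mem_Icc_of_mul_nonneg {R : Type*} [CommRing R] [LinearOrder R] [IsStrictOrderedRing R]
    {a b x l r : R} (ha : a ∈ Set.Icc l r) (hb : b ∈ Set.Icc l r) (h : 0 ≤ (x - a) * (b - x)) :
    x ∈ Set.Icc l r := by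
  rcases nonneg_and_nonneg_or_nonpos_and_nonpos_of_mul_nonneg h with ⟨hax, hxb⟩ | ⟨hxa, hbx⟩
  · exact ⟨by linarith [ha.1], by linarith [hb.2]⟩
  · exact ⟨by linarith [hb.1], by linarith [ha.2]⟩

section Game

variable {m n : ℕ} {ul uf : Fin m → Fin n → ℝ} {δ : ℝ} {x : Fin m → ℝ} {j : Fin n}

lemma mem_BRd_iff : j ∈ BRd uf δ x ↔ ∀ k, mixU uf x k < mixU uf x j + δ := by
  have : Nonempty (Fin n) := ⟨j⟩
  rw [BRd, Set.mem_ofPred_eq, gt_iff_lt, sub_lt_iff_lt_add,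
    iSup, (Set.finite_range _).csSup_lt_iff (range_nonempty _), forall_mem_range]

lemma BRd_nonempty [Nonempty (Fin n)] (hδ : 0 < δ) : (BRd uf δ x).Nonempty := by
  obtain ⟨j, hj⟩ := Finite.exists_max (mixU uf x)
  exact ⟨j, mem_BRd_iff.2 fun k => (hj k).trans_lt (lt_add_of_pos_right _ hδ)⟩

lemma valBR_le (hj : j ∈ BRd uf δ x) : valBR ul uf δ x ≤ mixU ul x j :=
  csInf_le (Set.toFinite _).bddBelow (mem_image_of_mem _ hj)

lemma mixU_le_of_forall_le {C : ℝ} (hC : ∀ i, ul i j ≤ C) (hx : x ∈ simplex m) :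
    mixU ul x j ≤ C := by
  calc mixU ul x j ≤ ∑ i, x i * C :=
        Finset.sum_le_sum fun i _ => mul_le_mul_of_nonneg_left (hC i) (hx.1 i)
    _ = C := by rw [← Finset.sum_mul, hx.2, one_mul]

lemma bddAbove_valBR_image [Nonempty (Fin n)] (hδ : 0 < δ) :
    BddAbove (valBR ul uf δ '' simplex m) := by
  obtain ⟨C, hC⟩ := (Set.finite_range fun p : Fin m × Fin n => ul p.1 p.2).bddAbove
  refine ⟨C, ?_⟩
  rintro _ ⟨x, hx, rfl⟩
  obtain ⟨j, hj⟩ := BRd_nonempty (uf := uf) (x := x) hδ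
  exact (valBR_le hj).trans (mixU_le_of_forall_le (fun i => hC ⟨(i, j), rfl⟩) hx)

lemma le_uRSE [Nonempty (Fin n)] {c : ℝ} (hδ : 0 < δ) (hx : x ∈ simplex m)
    (hc : ∀ j ∈ BRd uf δ x, c ≤ mixU ul x j) : c ≤ uRSE ul uf δ :=
  (le_csInf ((BRd_nonempty hδ).image _) (forall_mem_image.2 hc)).trans
    (le_csSup (bddAbove_valBR_image hδ) (mem_image_of_mem _ hx))

lemma exists_lt_mixU_of_lt_uRSE [NeZero m] {c : ℝ} (hc : c < uRSE ul uf δ) :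
    ∃ x ∈ simplex m, ∀ j ∈ BRd uf δ x, c < mixU ul x j := by
  have hne : (simplex m).Nonempty := ⟨_, single_mem_stdSimplex ℝ 0⟩
  obtain ⟨_, ⟨x, hx, rfl⟩, hcx⟩ := exists_lt_of_lt_csSup (hne.image _) hc
  exact ⟨x, hx, fun j hj => hcx.trans_le (valBR_le hj)⟩

/-- The strategies under which `j` beats every other follower action by at least `δ`; for `0 < δ`
these are the strategies whose only `δ`-optimal response is `j`. -/
def inducibleRegion (uf : Fin m → Fin n → ℝ) (δ : ℝ) (j : Fin n) : Set (Fin m → ℝ) :=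
  {x ∈ simplex m | ∀ k ≠ j, mixU uf x k + δ ≤ mixU uf x j}

/-- Every follower action can be made optimal by a margin of at least `D`. -/
def IsInducible (uf : Fin m → Fin n → ℝ) (D : ℝ) : Prop :=
  ∀ j, (inducibleRegion uf D j).Nonempty

lemma BRd_eq_singleton_iff (hδ : 0 < δ) (hx : x ∈ simplex m) :
    BRd uf δ x = {j} ↔ x ∈ inducibleRegion uf δ j := by
  have : Nonempty (Fin n) := ⟨j⟩
  constructor
  · intro h
    obtain ⟨i, hi⟩ := Finite.exists_max (mixU uf x)
    have hij : i = j := h.subset <|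
      mem_BRd_iff.2 fun k => (hi k).trans_lt (lt_add_of_pos_right _ hδ)
    subst hij
    refine ⟨hx, fun k hk => not_lt.1 fun hlt => hk (h.subset (mem_BRd_iff.2 fun l => ?_))⟩
    linarith [hi l]
  · rintro ⟨-, h⟩
    refine (BRd_nonempty hδ).subset_singleton_iff.1 fun k hk => not_not.1 fun hkj => ?_
    exact ((mem_BRd_iff.1 hk j).trans_le (h k hkj)).false

lemma mixU_le_uRSE (hδ : 0 < δ) (hx : x ∈ inducibleRegion uf δ j) :
    mixU ul x j ≤ uRSE ul uf δ := by
  have : Nonempty (Fin n) := ⟨j⟩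
  refine le_uRSE hδ hx.1 fun k hk => ?_
  rw [(BRd_eq_singleton_iff hδ hx.1).2 hx, mem_singleton_iff] at hk
  rw [hk]

lemma isInducible_indGap [NeZero m] [Nontrivial (Fin n)] (uf : Fin m → Fin n → ℝ) :
    IsInducible uf (indGap uf) := by
  intro j
  let margin (x : Fin m → ℝ) : ℝ := ⨅ k : {k // k ≠ j}, (mixU uf x j - mixU uf x k)
  have hmargin : UpperSemicontinuous margin :=
    upperSemicontinuous_ciInf (fun _ => (Set.finite_range _).bddBelow) fun k =>
      Continuous.upperSemicontinuous (by unfold mixU; fun_prop)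
  have hne : (simplex m).Nonempty := ⟨_, single_mem_stdSimplex ℝ 0⟩
  obtain ⟨x, hx, hmax⟩ := (hmargin.upperSemicontinuousOn _).exists_isMaxOn hne
    (isCompact_stdSimplex ℝ (Fin m))
  refine ⟨x, hx, fun k hk => ?_⟩
  have hgap : indGap uf ≤ mixU uf x j - mixU uf x k :=
    calc indGap uf ≤ sSup (margin '' simplex m) := ciInf_le (Set.finite_range _).bddBelow j
      _ ≤ margin x := csSup_le (hne.image _) (forall_mem_image.2 hmax)
      _ ≤ mixU uf x j - mixU uf x k :=
        ciInf_le (Set.finite_range _).bddBelow (⟨k, hk⟩ : {k // k ≠ j})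
  linarith

end Game

section TwoActions

variable {n : ℕ} {u ul uf : Fin 2 → Fin n → ℝ} {i j k : Fin n} {t t' δ D c : ℝ}

/-- The mixed strategy of two actions giving probability `t` to the second. -/
def strategy (t : ℝ) : Fin 2 → ℝ := ![1 - t, t]

lemma strategy_mem_simplex : strategy t ∈ simplex 2 ↔ t ∈ Set.Icc 0 1 := by
  simp [simplex, strategy, stdSimplex, Fin.forall_fin_two, and_comm]

lemma exists_strategy_eq {x : Fin 2 → ℝ} (hx : x ∈ simplex 2) : ∃ t, strategy t = x := by
  have hsum : x 0 + x 1 = 1 := by simpa only [Fin.sum_univ_two] using hx.2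
  refine ⟨x 1, funext (Fin.forall_fin_two.2 ⟨?_, rfl⟩)⟩
  exact (eq_sub_of_add_eq hsum).symm

lemma IsInducible.exists_strategy_mem (hD : IsInducible uf D) (j : Fin n) :
    ∃ t, strategy t ∈ inducibleRegion uf D j := by
  obtain ⟨x, hx⟩ := hD j
  obtain ⟨t, rfl⟩ := exists_strategy_eq hx.1
  exact ⟨t, hx⟩

/-- The slope of the utility against `j` as a function of the probability of the second action. -/
def slopeU (u : Fin 2 → Fin n → ℝ) (j : Fin n) : ℝ := u 1 j - u 0 j

lemma mixU_strategy : mixU u (strategy t) j = u 0 j + slopeU u j * t := by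
  simp only [mixU, strategy, slopeU, Fin.sum_univ_two, Matrix.cons_val_zero, Matrix.cons_val_one]
  ring

lemma mixU_strategy_le (h : 0 ≤ slopeU u j * (t' - t)) :
    mixU u (strategy t) j ≤ mixU u (strategy t') j := by
  rw [mixU_strategy, mixU_strategy]
  linarith

lemma add_le_mixU_of_mem_inducibleRegion (ht : strategy t ∈ inducibleRegion u δ j) (hij : i ≠ j)
    (h : 0 ≤ (t' - t) * (slopeU u j - slopeU u i)) :
    mixU u (strategy t') i + δ ≤ mixU u (strategy t') j := by
  have hmargin := ht.2 i hij
  rw [mixU_strategy, mixU_strategy] at hmargin ⊢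
  linarith

lemma slopeU_ne_of_isInducible (hD : IsInducible uf D) (hD0 : 0 < D) (hjk : j ≠ k) :
    slopeU uf j ≠ slopeU uf k := by
  intro h
  obtain ⟨tj, hj⟩ := hD.exists_strategy_mem j
  obtain ⟨tk, hk⟩ := hD.exists_strategy_mem k
  have hmargin := add_le_mixU_of_mem_inducibleRegion (t' := tk) hj hjk.symm (by simp [h])
  linarith [hk.2 j hjk]

/-- The slopes of `j` and `k` differ and no other slope lies strictly between them. -/
def SlopeAdjacent (u : Fin 2 → Fin n → ℝ) (j k : Fin n) : Prop :=
  slopeU u j ≠ slopeU u k ∧ ∀ i, 0 ≤ (slopeU u i - slopeU u j) * (slopeU u i - slopeU u k)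

lemma SlopeAdjacent.symm (h : SlopeAdjacent u j k) : SlopeAdjacent u k j :=
  ⟨h.1.symm, fun i => by rw [mul_comm]; exact h.2 i⟩

lemma SlopeAdjacent.same_side (h : SlopeAdjacent u j k) (i : Fin n) :
    0 ≤ (slopeU u j - slopeU u i) * (slopeU u k - slopeU u j) ∨
      0 ≤ (slopeU u k - slopeU u i) * (slopeU u j - slopeU u k) := by
  by_contra! hneg
  have hpos := mul_pos_of_neg_of_neg hneg.1 hneg.2
  have hprod := mul_nonneg (h.2 i) (sq_nonneg (slopeU u k - slopeU u j))
  linarith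

lemma exists_slopeAdjacent {e : ℝ} (h : ∃ k, 0 < e * (slopeU u k - slopeU u j)) :
    ∃ k, 0 < e * (slopeU u k - slopeU u j) ∧ SlopeAdjacent u j k := by
  obtain ⟨k, hk, hmin⟩ := Set.exists_min_image {k | 0 < e * (slopeU u k - slopeU u j)}
    (fun k => e * slopeU u k) (Set.toFinite _) h
  have hk : 0 < e * (slopeU u k - slopeU u j) := hk
  have he : e ≠ 0 := left_ne_zero_of_mul hk.ne'
  refine ⟨k, hk, (sub_ne_zero.1 (right_ne_zero_of_mul hk.ne')).symm, fun i => ?_⟩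
  rcases lt_or_ge 0 (e * (slopeU u i - slopeU u j)) with hi | hi
  · exact mul_nonneg_of_mul_nonneg_of_mul_nonneg he (by linarith) (by linarith [hmin i hi])
  · rw [← neg_mul_neg]
    exact mul_nonneg_of_mul_nonneg_of_mul_nonneg he (by linarith) (by linarith)

lemma slopeAdjacent_of_mem_BRd (hD : IsInducible uf D) (hδ : δ ∈ Set.Ioc 0 D) (hjk : j ≠ k)
    (hj : j ∈ BRd uf δ (strategy t)) (hk : k ∈ BRd uf δ (strategy t)) : SlopeAdjacent uf j k := by
  refine ⟨slopeU_ne_of_isInducible hD (hδ.1.trans_le hδ.2) hjk, fun i => ?_⟩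
  obtain ⟨ti, hi⟩ := hD.exists_strategy_mem i
  have hadvantage : ∀ l ∈ BRd uf δ (strategy t), i ≠ l →
      0 < (slopeU uf i - slopeU uf l) * (ti - t) := by
    intro l hl hil
    have h₁ := hi.2 l hil.symm
    have h₂ := mem_BRd_iff.1 hl i
    rw [mixU_strategy, mixU_strategy] at h₁ h₂
    linarith [hδ.2]
  rcases eq_or_ne i j with rfl | hij
  · simp
  rcases eq_or_ne i k with rfl | hik
  · simp
  have hpos := hadvantage j hj hij
  exact mul_nonneg_of_mul_nonneg_of_mul_nonneg (right_ne_zero_of_mul hpos.ne') hpos.le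
    (hadvantage k hk hik).le

/-- The point `t` at which `j` beats `k` by exactly `δ`, as an affine function of `δ`; it is `0` by
convention when the slopes of `j` and `k` agree. -/
def tippingPoint (u : Fin 2 → Fin n → ℝ) (j k : Fin n) : ℝ →ᵃ[ℝ] ℝ :=
  (slopeU u k - slopeU u j)⁻¹ • (AffineMap.const ℝ ℝ (u 0 j - u 0 k) - AffineMap.id ℝ ℝ)

-- Multiplying by the slope difference makes the side of the tipping point on which `t` lies
-- independent of which of the two slopes is larger.
lemma sub_tippingPoint_mul (h : slopeU u j ≠ slopeU u k) :
    (t - tippingPoint u j k δ) * (slopeU u k - slopeU u j) =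
      δ - (mixU u (strategy t) j - mixU u (strategy t) k) := by
  have hne : slopeU u k - slopeU u j ≠ 0 := sub_ne_zero.2 h.symm
  simp only [tippingPoint, mixU_strategy, AffineMap.coe_smul, AffineMap.coe_sub, Pi.smul_apply,
    Pi.sub_apply, AffineMap.const_apply, AffineMap.id_apply, smul_eq_mul]
  field_simp
  ring

lemma mixU_tippingPoint (h : slopeU u j ≠ slopeU u k) :
    mixU u (strategy (tippingPoint u j k δ)) j =
      mixU u (strategy (tippingPoint u j k δ)) k + δ := by
  have htie := sub_tippingPoint_mul (t := tippingPoint u j k δ) (δ := δ) h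
  rw [sub_self, zero_mul] at htie
  linarith

lemma strategy_tippingPoint_mem (hD : IsInducible uf D) (hjk : SlopeAdjacent uf j k)
    (hδ : δ ∈ Set.Ioc 0 D) :
    strategy (tippingPoint uf j k δ) ∈ inducibleRegion uf δ j := by
  have hne : slopeU uf k - slopeU uf j ≠ 0 := sub_ne_zero.2 hjk.1.symm
  have hjk' : j ≠ k := ne_of_apply_ne _ hjk.1
  obtain ⟨tj, hj⟩ := hD.exists_strategy_mem j
  obtain ⟨tk, hk⟩ := hD.exists_strategy_mem k
  set x := tippingPoint uf j k δ with hx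
  have hpast : 0 ≤ (x - tj) * (slopeU uf k - slopeU uf j) := by
    linarith [sub_tippingPoint_mul (t := tj) (δ := δ) hjk.1, hj.2 k hjk'.symm, hδ.2]
  have hbefore : 0 ≤ (tk - x) * (slopeU uf k - slopeU uf j) := by
    linarith [sub_tippingPoint_mul (t := tk) (δ := δ) hjk.1, hk.2 j hjk', hδ.1, hδ.2]
  refine ⟨strategy_mem_simplex.2 ?_, fun i hij => ?_⟩
  · exact mem_Icc_of_mul_nonneg (strategy_mem_simplex.1 hj.1) (strategy_mem_simplex.1 hk.1)
      (mul_nonneg_of_mul_nonneg_of_mul_nonneg hne hpast hbefore)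
  · have htie := mixU_tippingPoint (δ := δ) hjk.1
    rw [← hx] at htie
    rcases eq_or_ne i k with rfl | hik
    · exact htie.ge
    rcases hjk.same_side i with hi | hi
    · have hmargin := add_le_mixU_of_mem_inducibleRegion hj hij
        (mul_nonneg_of_mul_nonneg_of_mul_nonneg hne hpast hi)
      linarith [hδ.2]
    · have hmargin := add_le_mixU_of_mem_inducibleRegion (t' := x) hk hik
        (mul_nonneg_of_mul_nonneg_of_mul_nonneg (sub_ne_zero.2 hjk.1) (by linarith) hi)
      linarith [hδ.1, hδ.2]

lemma exists_affine_maximizer (hD : IsInducible uf D) (j : Fin n) (e : ℝ) :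
    ∃ r : ℝ →ᵃ[ℝ] ℝ, ∀ δ ∈ Set.Ioc 0 D, strategy (r δ) ∈ inducibleRegion uf δ j ∧
      ∀ t, strategy t ∈ inducibleRegion uf δ j → e * t ≤ e * r δ := by
  wlog he : e ≠ 0 generalizing e
  · obtain ⟨r, hr⟩ := this 1 one_ne_zero
    exact ⟨r, fun δ hδ => ⟨(hr δ hδ).1, fun t _ => by simp [not_not.1 he]⟩⟩
  by_cases h : ∃ k, 0 < e * (slopeU uf k - slopeU uf j)
  · obtain ⟨k, hek, hjk⟩ := exists_slopeAdjacent h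
    refine ⟨tippingPoint uf j k, fun δ hδ => ⟨strategy_tippingPoint_mem hD hjk hδ, fun t ht => ?_⟩⟩
    have hbefore : 0 ≤ (tippingPoint uf j k δ - t) * (slopeU uf k - slopeU uf j) := by
      linarith [sub_tippingPoint_mul (t := t) (δ := δ) hjk.1,
        ht.2 k (ne_of_apply_ne _ hjk.1).symm]
    have := mul_nonneg_of_mul_nonneg_of_mul_nonneg (right_ne_zero_of_mul hek.ne') hek.le hbefore
    linarith
  · push Not at h
    obtain ⟨b, hb, hmax⟩ : ∃ b ∈ Set.Icc (0 : ℝ) 1, ∀ t ∈ Set.Icc (0 : ℝ) 1, e * t ≤ e * b :=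
      isCompact_Icc.exists_isMaxOn (f := (e * ·)) (nonempty_Icc.2 zero_le_one) (by fun_prop)
    obtain ⟨tj, hj⟩ := hD.exists_strategy_mem j
    have hbj : 0 ≤ (b - tj) * e := by linarith [hmax tj (strategy_mem_simplex.1 hj.1)]
    refine ⟨AffineMap.const ℝ ℝ b, fun δ hδ => ⟨⟨strategy_mem_simplex.2 hb, fun i hij => ?_⟩,
      fun t ht => hmax t (strategy_mem_simplex.1 ht.1)⟩⟩
    have hmargin := add_le_mixU_of_mem_inducibleRegion hj hij
      (mul_nonneg_of_mul_nonneg_of_mul_nonneg he hbj (by linarith [h i]))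
    exact (add_le_add_right hδ.2 _).trans hmargin

lemma affinelyMinorized_of_forall_mem {r : ℝ →ᵃ[ℝ] ℝ}
    (hr : ∀ δ ∈ Set.Ioc 0 D, strategy (r δ) ∈ inducibleRegion uf δ j)
    (hc : c ≤ mixU ul (strategy (r δ)) j) :
    AffinelyMinorized (uRSE ul uf) (Set.Ioc 0 D) δ c := by
  let g : ℝ →ᵃ[ℝ] ℝ := AffineMap.const ℝ ℝ (ul 0 j) + slopeU ul j • r
  have hg : ∀ δ, g δ = mixU ul (strategy (r δ)) j := fun δ => mixU_strategy.symm
  exact ⟨g, hc.trans_eq (hg δ).symm, fun δ' hδ' =>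
    (hg δ').trans_le (mixU_le_uRSE hδ'.1 (hr δ' hδ'))⟩

lemma affinelyMinorized_of_mem_inducibleRegion (hD : IsInducible uf D) (hδ : δ ∈ Set.Ioc 0 D)
    (ht : strategy t ∈ inducibleRegion uf δ j) (hc : c ≤ mixU ul (strategy t) j) :
    AffinelyMinorized (uRSE ul uf) (Set.Ioc 0 D) δ c := by
  obtain ⟨r, hr⟩ := exists_affine_maximizer hD j (slopeU ul j)
  refine affinelyMinorized_of_forall_mem (fun δ' hδ' => (hr δ' hδ').1) (hc.trans ?_)
  exact mixU_strategy_le (by linarith [(hr δ hδ).2 t ht])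

lemma affinelyMinorized_of_slopeU_mul_nonpos (hD : IsInducible uf D)
    (hjk : SlopeAdjacent uf j k) (hk : k ∈ BRd uf δ (strategy t))
    (hslope : slopeU ul j * (slopeU uf k - slopeU uf j) ≤ 0) (hc : c ≤ mixU ul (strategy t) j) :
    AffinelyMinorized (uRSE ul uf) (Set.Ioc 0 D) δ c := by
  refine affinelyMinorized_of_forall_mem
    (fun δ' hδ' => strategy_tippingPoint_mem hD hjk hδ') (hc.trans ?_)
  have hpast : 0 ≤ (t - tippingPoint uf j k δ) * (slopeU uf k - slopeU uf j) := by
    linarith [sub_tippingPoint_mul (t := t) (δ := δ) hjk.1, mem_BRd_iff.1 hk j]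
  refine mixU_strategy_le ?_
  rw [← neg_mul_neg, neg_sub]
  exact mul_nonneg_of_mul_nonneg_of_mul_nonneg (sub_ne_zero.2 hjk.1.symm) (by linarith) hpast

lemma notMem_BRd_of_past_tippingPoint (hD : IsInducible uf D)
    (hjk : SlopeAdjacent uf j k) (hδ : δ ∈ Set.Ioc 0 D) (hij : i ≠ j)
    (hside : 0 ≤ (slopeU uf j - slopeU uf i) * (slopeU uf k - slopeU uf j))
    (hpast : 0 ≤ (t - tippingPoint uf j k δ) * (slopeU uf k - slopeU uf j)) :
    i ∉ BRd uf δ (strategy t) := fun hi =>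
  (mem_BRd_iff.1 hi j).not_ge <|
    add_le_mixU_of_mem_inducibleRegion (strategy_tippingPoint_mem hD hjk hδ) hij
      (mul_nonneg_of_mul_nonneg_of_mul_nonneg (sub_ne_zero.2 hjk.1.symm) hpast hside)

lemma mixU_le_uRSE_of_before_tippingPoint (hD : IsInducible uf D) (hjk : SlopeAdjacent uf j k)
    (hδ : δ ∈ Set.Ioc 0 D) (hslope : 0 ≤ slopeU ul j * (slopeU uf k - slopeU uf j))
    (hbefore : 0 ≤ (tippingPoint uf j k δ - t) * (slopeU uf k - slopeU uf j)) :
    mixU ul (strategy t) j ≤ uRSE ul uf δ := by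
  refine le_trans (mixU_strategy_le ?_) (mixU_le_uRSE hδ.1 (strategy_tippingPoint_mem hD hjk hδ))
  exact mul_nonneg_of_mul_nonneg_of_mul_nonneg (sub_ne_zero.2 hjk.1.symm) hslope hbefore

lemma mixU_le_uRSE_of_crossing (hD : IsInducible uf D) (hjk : SlopeAdjacent uf j k)
    (hδ : δ ∈ Set.Ioc 0 D) (hj : 0 ≤ slopeU ul j * (slopeU uf k - slopeU uf j))
    (hk : 0 ≤ slopeU ul k * (slopeU uf j - slopeU uf k))
    (hcross : mixU ul (strategy t) j = mixU ul (strategy t) k) :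
    mixU ul (strategy t) j ≤ uRSE ul uf δ := by
  rcases le_total 0 ((tippingPoint uf j k δ - t) * (slopeU uf k - slopeU uf j)) with hbj | hpj
  · exact mixU_le_uRSE_of_before_tippingPoint hD hjk hδ hj hbj
  rcases le_total 0 ((tippingPoint uf k j δ - t) * (slopeU uf j - slopeU uf k)) with hbk | hpk
  · exact hcross.trans_le (mixU_le_uRSE_of_before_tippingPoint hD hjk.symm hδ hk hbk)
  have : Nonempty (Fin n) := ⟨j⟩
  refine le_uRSE (x := strategy t) hδ.1 ?_ fun i hi => ?_
  · have hmem := strategy_tippingPoint_mem hD hjk hδ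
    have hmem' := strategy_tippingPoint_mem hD hjk.symm hδ
    exact strategy_mem_simplex.2 (mem_Icc_of_mul_nonneg (strategy_mem_simplex.1 hmem.1)
      (strategy_mem_simplex.1 hmem'.1) (mul_nonneg_of_mul_nonneg_of_mul_nonneg
      (sub_ne_zero.2 hjk.1.symm) (by linarith) (by linarith)))
  · rcases eq_or_ne i j with rfl | hij
    · exact le_rfl
    rcases eq_or_ne i k with rfl | hik
    · exact hcross.le
    rcases hjk.same_side i with hside | hside
    · exact (notMem_BRd_of_past_tippingPoint hD hjk hδ hij hside (by linarith) hi).elim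
    · exact (notMem_BRd_of_past_tippingPoint hD hjk.symm hδ hik hside (by linarith) hi).elim

lemma affinelyMinorized_of_mem_BRd_of_mem_BRd (hD : IsInducible uf D)
    (hδ : δ ∈ Set.Ioc 0 D) (hjk : j ≠ k) (hj : j ∈ BRd uf δ (strategy t))
    (hk : k ∈ BRd uf δ (strategy t)) (hcj : c ≤ mixU ul (strategy t) j)
    (hck : c ≤ mixU ul (strategy t) k) :
    AffinelyMinorized (uRSE ul uf) (Set.Ioc 0 D) δ c := by
  have hadj : SlopeAdjacent uf j k := slopeAdjacent_of_mem_BRd hD hδ hjk hj hk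
  rcases le_or_gt (slopeU ul j * (slopeU uf k - slopeU uf j)) 0 with hsj | hsj
  · exact affinelyMinorized_of_slopeU_mul_nonpos hD hadj hk hsj hcj
  rcases le_or_gt (slopeU ul k * (slopeU uf j - slopeU uf k)) 0 with hsk | hsk
  · exact affinelyMinorized_of_slopeU_mul_nonpos hD hadj.symm hj hsk hck
  have hne : slopeU ul j ≠ slopeU ul k := fun h => by rw [h] at hsj; linarith
  set q := tippingPoint ul j k 0
  have hcross : mixU ul (strategy q) j = mixU ul (strategy q) k := by
    rw [mixU_tippingPoint hne, add_zero]
  have hcq : c ≤ mixU ul (strategy q) j := by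
    have hdiff : slopeU uf k - slopeU uf j ≠ 0 := sub_ne_zero.2 hadj.1.symm
    rcases le_total 0 ((q - t) * (slopeU uf k - slopeU uf j)) with hq | hq
    · exact hcj.trans (mixU_strategy_le (mul_nonneg_of_mul_nonneg_of_mul_nonneg hdiff hsj.le hq))
    · rw [hcross]
      refine hck.trans (mixU_strategy_le ?_)
      exact mul_nonneg_of_mul_nonneg_of_mul_nonneg (sub_ne_zero.2 hadj.1) hsk.le (by linarith)
  exact ⟨AffineMap.const ℝ ℝ _, hcq, fun δ' hδ' =>
    mixU_le_uRSE_of_crossing hD hadj hδ' hsj.le hsk.le hcross⟩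

theorem convexOn_uRSE_Ioc_of_isInducible [Nonempty (Fin n)] (hD : IsInducible uf D) :
    ConvexOn ℝ (Set.Ioc 0 D) (uRSE ul uf) := by
  refine convexOn_of_affinelyMinorized (convex_Ioc 0 D) fun δ hδ c hc => ?_
  obtain ⟨x, hx, hcx⟩ := exists_lt_mixU_of_lt_uRSE hc
  obtain ⟨t, rfl⟩ := exists_strategy_eq hx
  obtain ⟨j, hj⟩ := BRd_nonempty (uf := uf) (x := strategy t) hδ.1
  rcases Set.eq_singleton_or_nontrivial hj with hsingle | hnontrivial
  · exact affinelyMinorized_of_mem_inducibleRegion hD hδ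
      ((BRd_eq_singleton_iff hδ.1 hx).1 hsingle) (hcx j hj).le
  · obtain ⟨k, hk, hkj⟩ := hnontrivial.exists_ne j
    exact affinelyMinorized_of_mem_BRd_of_mem_BRd hD hδ hkj.symm hj hk (hcx j hj).le (hcx k hk).le

end TwoActions

theorem uRSE_convex_of_two_actions_general (n : ℕ) (hn : 2 ≤ n) (ul uf : Fin 2 → Fin n → ℝ) :
    ConvexOn ℝ (Set.Ioc 0 (indGap uf)) (uRSE ul uf) := by
  have : Nontrivial (Fin n) := Fin.nontrivial_iff_two_le.2 hn
  exact convexOn_uRSE_Ioc_of_isInducible (isInducible_indGap uf)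

/-- when `m = 2`, `u_RSE` is convex on `(0, Δ)`. -/
theorem uRSE_convex_of_two_actions (n : ℕ) (hn : 2 ≤ n) (ul uf : Fin 2 → Fin n → ℝ)
    (hul : ∀ i j, ul i j ∈ Set.Icc (0:ℝ) 1) (huf : ∀ i j, uf i j ∈ Set.Icc (0:ℝ) 1)
    (hΔ : 0 < indGap uf) :
    ConvexOn ℝ (Set.Ioo 0 (indGap uf)) (uRSE ul uf) :=
  (uRSE_convex_of_two_actions_general n hn ul uf).subset Ioo_subset_Ioc_self (convex_Ioo _ _)
end
end

section
/- Let A : [m]×[n] → [0,1] be a payoff matrix. For any ε > 0 and any mixed strategy x ∈ Δ^m, setting k = ⌈log(2n)/(2ε²)⌉, there exists a k-uniform mixed strategy x̄ ∈ Δ^m (i.e., every coordinate of x̄ is an integer multiple of 1/k) such that |Σ_i x_i·A(i, j) − Σ_i x̄_i·A(i, j)| ≤ ε for every j ∈ [n]. -/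
open Finset Set

noncomputable section

/-! Draw `k` pure strategies independently from `x` and play their empirical distribution. For a
fixed column, Hoeffding's lemma bounds the exponential moments of the deviation of the sampled
payoff from its mean, and these bounds multiply over independent draws. Averaging the potential
`∑ j, cosh (t * deviation j)` over all samples treats both signs and all columns at once; some
sample does no worse than the average, and a suitable `t` turns its small potential into small
deviations. With Hoeffding tail bounds and a union bound one would need the failure probability to
be strictly below `1`, but the bound `2 * n * exp (-2 * k * ε ^ 2)` can equal `1`. -/

theorem abs_le_log_of_cosh_le {y c : ℝ} (h : Real.cosh y ≤ c) : |y| ≤ Real.log (2 * c) := by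
  have hc : 0 < c := (Real.cosh_pos y).trans_le h
  rw [Real.le_log_iff_exp_le (by positivity)]
  have hexp : Real.exp |y| ≤ 2 * Real.cosh y := by
    rw [← Real.cosh_abs, Real.cosh_eq]
    linarith [Real.exp_pos (-|y|)]
  linarith

theorem log_two_mul_natCast_pos {n : ℕ} (hn : 1 ≤ n) : 0 < Real.log (2 * n) := by
  have hn' : (1 : ℝ) ≤ n := Nat.one_le_cast.2 hn
  exact Real.log_pos (by linarith)

section WeightedAverages

variable {ι : Type*} [Fintype ι] {x : ι → ℝ}

theorem exists_le_sum_mul_of_mem_stdSimplex (hx : x ∈ stdSimplex ℝ ι) (f : ι → ℝ) :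
    ∃ i, f i ≤ ∑ i, x i * f i := by
  have hpos : 0 < ∑ i, x i := hx.2 ▸ one_pos
  obtain ⟨i, -, hi⟩ := (concaveOn_id convex_univ).exists_le_of_centerMass
    (fun i _ => hx.1 i) hpos (fun i _ => Set.mem_univ (f i))
  rw [centerMass_eq_of_sum_1 _ _ hx.2] at hi
  exact ⟨i, hi⟩

open MeasureTheory ProbabilityTheory in
theorem sum_mul_exp_sub_mean_le (hx : x ∈ stdSimplex ℝ ι) {f : ι → ℝ} {a b : ℝ}
    (hf : ∀ i, f i ∈ Set.Icc a b) (t : ℝ) :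
    ∑ i, x i * Real.exp (t * (f i - ∑ i', x i' * f i')) ≤
      Real.exp (t ^ 2 * (b - a) ^ 2 / 8) := by
  let _ : MeasurableSpace ι := ⊤
  have hsum : ∑ i, ENNReal.ofReal (x i) = 1 := by
    rw [← ENNReal.ofReal_sum_of_nonneg fun i _ => hx.1 i, hx.2, ENNReal.ofReal_one]
  let p : PMF ι := PMF.ofFintype (fun i => ENNReal.ofReal (x i)) hsum
  have integral_eq (g : ι → ℝ) : ∫ i, g i ∂p.toMeasure = ∑ i, x i * g i := by
    simp only [PMF.integral_eq_sum, p, PMF.ofFintype_apply, ENNReal.toReal_ofReal (hx.1 _),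
      smul_eq_mul]
  have hoeffding := (hasSubgaussianMGF_of_mem_Icc (μ := p.toMeasure)
    (measurable_of_finite f).aemeasurable (Filter.Eventually.of_forall hf)).mgf_le t
  rw [mgf, integral_eq, integral_eq] at hoeffding
  refine hoeffding.trans_eq (congrArg Real.exp ?_)
  simp only [NNReal.coe_pow, NNReal.coe_div, coe_nnnorm, Real.norm_eq_abs, NNReal.coe_ofNat,
    div_pow, sq_abs]
  ring

end WeightedAverages

section Sampling

variable {ι κ : Type*} [Fintype ι] [Fintype κ] {x : ι → ℝ} {k : ℕ}

/-- The probability of the sample `s` when its `k` entries are drawn independently from `x`. -/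
def sampleWeight (x : ι → ℝ) (s : Fin k → ι) : ℝ :=
  ∏ l, x (s l)

/-- The total deviation of the sampled values `f (s l)` from the mean of `f` under `x`. It is not
normalized: it is `k` times the error of the empirical mean. -/
def sampleDeviation (x f : ι → ℝ) (s : Fin k → ι) : ℝ :=
  ∑ l, (f (s l) - ∑ i, x i * f i)

theorem sampleWeight_mem_stdSimplex (hx : x ∈ stdSimplex ℝ ι) (k : ℕ) :
    (sampleWeight x : (Fin k → ι) → ℝ) ∈ stdSimplex ℝ (Fin k → ι) := by
  refine ⟨fun s => prod_nonneg fun l _ => hx.1 (s l), ?_⟩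
  simp only [sampleWeight, ← Fintype.sum_pow, hx.2, one_pow]

theorem sum_sampleWeight_mul_exp_sum (x g : ι → ℝ) (k : ℕ) :
    ∑ s : Fin k → ι, sampleWeight x s * Real.exp (∑ l, g (s l)) =
      (∑ i, x i * Real.exp (g i)) ^ k := by
  simp only [sampleWeight, Fintype.sum_pow, Real.exp_sum, prod_mul_distrib]

theorem sum_sampleWeight_mul_exp_le (hx : x ∈ stdSimplex ℝ ι) {f : ι → ℝ} {a b : ℝ}
    (hf : ∀ i, f i ∈ Set.Icc a b) (t : ℝ) (k : ℕ) :
    ∑ s : Fin k → ι, sampleWeight x s * Real.exp (t * sampleDeviation x f s) ≤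
      Real.exp (k * (t ^ 2 * (b - a) ^ 2 / 8)) := by
  simp only [sampleDeviation, mul_sum _ _ t]
  rw [sum_sampleWeight_mul_exp_sum x (fun i => t * (f i - ∑ i', x i' * f i')), Real.exp_nat_mul]
  exact pow_le_pow_left₀ (sum_nonneg fun i _ => mul_nonneg (hx.1 i) (Real.exp_nonneg _))
    (sum_mul_exp_sub_mean_le hx hf t) k

theorem sum_sampleWeight_mul_cosh_le (hx : x ∈ stdSimplex ℝ ι) {f : ι → ℝ} {a b : ℝ}
    (hf : ∀ i, f i ∈ Set.Icc a b) (t : ℝ) (k : ℕ) :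
    ∑ s : Fin k → ι, sampleWeight x s * Real.cosh (t * sampleDeviation x f s) ≤
      Real.exp (k * (t ^ 2 * (b - a) ^ 2 / 8)) := by
  have hpos := sum_sampleWeight_mul_exp_le hx hf t k
  have hneg := sum_sampleWeight_mul_exp_le hx hf (-t) k
  simp only [neg_mul, neg_sq] at hneg
  have hcosh : ∑ s : Fin k → ι, sampleWeight x s * Real.cosh (t * sampleDeviation x f s) =
      (∑ s : Fin k → ι, sampleWeight x s * Real.exp (t * sampleDeviation x f s) +
        ∑ s : Fin k → ι, sampleWeight x s * Real.exp (-(t * sampleDeviation x f s))) / 2 := by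
    rw [← sum_add_distrib, sum_div]
    exact sum_congr rfl fun s _ => by rw [Real.cosh_eq, ← mul_add, mul_div_assoc]
  linarith

theorem exists_sum_cosh_sampleDeviation_le (hx : x ∈ stdSimplex ℝ ι) {A : ι → κ → ℝ} {a b : ℝ}
    (hA : ∀ i j, A i j ∈ Set.Icc a b) (t : ℝ) (k : ℕ) :
    ∃ s : Fin k → ι, ∑ j, Real.cosh (t * sampleDeviation x (A · j) s) ≤
      Fintype.card κ * Real.exp (k * (t ^ 2 * (b - a) ^ 2 / 8)) := by
  obtain ⟨s, hs⟩ := exists_le_sum_mul_of_mem_stdSimplex (sampleWeight_mem_stdSimplex hx k)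
    fun s => ∑ j, Real.cosh (t * sampleDeviation x (A · j) s)
  refine ⟨s, hs.trans ?_⟩
  calc ∑ s : Fin k → ι, sampleWeight x s * ∑ j, Real.cosh (t * sampleDeviation x (A · j) s)
      = ∑ j, ∑ s : Fin k → ι, sampleWeight x s * Real.cosh (t * sampleDeviation x (A · j) s) := by
        simp only [mul_sum]
        exact sum_comm
    _ ≤ ∑ _j : κ, Real.exp (k * (t ^ 2 * (b - a) ^ 2 / 8)) :=
        sum_le_sum fun j _ => sum_sampleWeight_mul_cosh_le hx (hA · j) t k
    _ = Fintype.card κ * Real.exp (k * (t ^ 2 * (b - a) ^ 2 / 8)) := by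
        rw [sum_const, card_univ, nsmul_eq_mul]

theorem exists_abs_mul_sampleDeviation_le (hx : x ∈ stdSimplex ℝ ι) {A : ι → κ → ℝ} {a b : ℝ}
    (hA : ∀ i j, A i j ∈ Set.Icc a b) (t : ℝ) (k : ℕ) :
    ∃ s : Fin k → ι, ∀ j, |t * sampleDeviation x (A · j) s| ≤
      Real.log (2 * Fintype.card κ) + k * (t ^ 2 * (b - a) ^ 2 / 8) := by
  obtain ⟨s, hs⟩ := exists_sum_cosh_sampleDeviation_le hx hA t k
  refine ⟨s, fun j => ?_⟩
  have : Nonempty κ := ⟨j⟩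
  have hj := (single_le_sum (fun j _ => (Real.cosh_pos _).le) (mem_univ j)).trans hs
  refine (abs_le_log_of_cosh_le hj).trans_eq ?_
  rw [← mul_assoc, Real.log_mul (by positivity) (Real.exp_ne_zero _), Real.log_exp]

theorem exists_abs_sampleDeviation_le (hx : x ∈ stdSimplex ℝ ι) {A : ι → κ → ℝ} {a b : ℝ}
    (hA : ∀ i j, A i j ∈ Set.Icc a b) {ε : ℝ} (hε : 0 < ε) (hk₀ : k ≠ 0)
    (hk : Real.log (2 * Fintype.card κ) * (b - a) ^ 2 / (2 * ε ^ 2) ≤ k) :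
    ∃ s : Fin k → ι, ∀ j, |sampleDeviation x (A · j) s| ≤ k * ε := by
  set L := Real.log (2 * Fintype.card κ)
  -- The optimal choice is `4 * ε / (b - a) ^ 2`. This one agrees with it when `hk` is an equality,
  -- and it also makes sense when `a = b`.
  let t := 2 * L / (k * ε)
  obtain ⟨s, hs⟩ := exists_abs_mul_sampleDeviation_le hx hA t k
  refine ⟨s, fun j => ?_⟩
  have hL : 0 < L := log_two_mul_natCast_pos (Fintype.card_pos_iff.2 ⟨j⟩)
  have ht : 0 < t := by positivity
  have hvariance : k * (t ^ 2 * (b - a) ^ 2 / 8) ≤ L :=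
    calc k * (t ^ 2 * (b - a) ^ 2 / 8)
        = L / k * (L * (b - a) ^ 2 / (2 * ε ^ 2)) := by simp only [t]; field_simp; ring
      _ ≤ L / k * k := by gcongr
      _ = L := by field_simp
  refine le_of_mul_le_mul_left ?_ ht
  calc t * |sampleDeviation x (A · j) s|
      = |t * sampleDeviation x (A · j) s| := by rw [abs_mul, abs_of_pos ht]
    _ ≤ L + L := (hs j).trans (by gcongr)
    _ = t * (k * ε) := by simp only [t]; field_simp; ring

end Sampling

section EmpiricalStrategy

variable {ι : Type*} [DecidableEq ι] {k : ℕ}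

/-- The `k`-uniform mixed strategy that plays a uniformly chosen entry of the sample
`s 0, …, s (k - 1)` of pure strategies. Only for `k ≠ 0` is it a probability vector. -/
def empiricalStrategy (s : Fin k → ι) (i : ι) : ℝ :=
  #{l | s l = i} / k

variable [Fintype ι]

theorem sum_empiricalStrategy_mul (s : Fin k → ι) (f : ι → ℝ) :
    ∑ i, empiricalStrategy s i * f i = (∑ l, f (s l)) / k := by
  simp only [empiricalStrategy, div_mul_eq_mul_div, ← sum_div]
  simp only [← sum_fiberwise' univ s f, sum_const, nsmul_eq_mul]

theorem empiricalStrategy_mem_stdSimplex (hk : k ≠ 0) (s : Fin k → ι) :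
    empiricalStrategy s ∈ stdSimplex ℝ ι := by
  refine ⟨fun i => div_nonneg (Nat.cast_nonneg _) (Nat.cast_nonneg _), ?_⟩
  simpa [hk] using sum_empiricalStrategy_mul s 1

theorem sum_mul_sub_sum_empiricalStrategy_mul (hk : k ≠ 0) (s : Fin k → ι) (x f : ι → ℝ) :
    ∑ i, x i * f i - ∑ i, empiricalStrategy s i * f i =
      -sampleDeviation x f s / k := by
  rw [sampleDeviation, sum_empiricalStrategy_mul, sum_sub_distrib, sum_const, card_univ,
    Fintype.card_fin, nsmul_eq_mul]
  field_simp
  ring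

end EmpiricalStrategy

theorem k_uniform_approx_general {ι κ : Type*} [Fintype ι] [Fintype κ] {A : ι → κ → ℝ} {a b : ℝ}
    (hA : ∀ i j, A i j ∈ Set.Icc a b) {ε : ℝ} (hε : 0 < ε) {x : ι → ℝ} (hx : x ∈ stdSimplex ℝ ι)
    {k : ℕ} (hk₀ : k ≠ 0) (hk : Real.log (2 * Fintype.card κ) * (b - a) ^ 2 / (2 * ε ^ 2) ≤ k) :
    ∃ xb ∈ stdSimplex ℝ ι, (∀ i, ∃ c : ℕ, xb i = (c : ℝ) / k) ∧
      ∀ j, |∑ i, x i * A i j - ∑ i, xb i * A i j| ≤ ε := by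
  classical
  obtain ⟨s, hs⟩ := exists_abs_sampleDeviation_le hx hA hε hk₀ hk
  refine ⟨empiricalStrategy s, empiricalStrategy_mem_stdSimplex hk₀ s, fun i => ⟨_, rfl⟩,
    fun j => ?_⟩
  rw [sum_mul_sub_sum_empiricalStrategy_mul hk₀, abs_div, abs_neg, Nat.abs_cast]
  exact div_le_of_le_mul₀ k.cast_nonneg hε.le ((hs j).trans_eq (mul_comm _ _))

theorem ceil_log_two_mul_div_ne_zero {n : ℕ} (hn : 1 ≤ n) {ε : ℝ} (hε : 0 < ε) :
    ⌈Real.log (2 * n) / (2 * ε ^ 2)⌉₊ ≠ 0 := by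
  have hlog := log_two_mul_natCast_pos hn
  exact (Nat.ceil_pos.2 (by positivity)).ne'

/-- every mixed strategy is ε-approximated (in payoff, against every
column) by a k-uniform strategy with `k = ⌈log(2n)/(2ε²)⌉`. -/
theorem k_uniform_approx (m n : ℕ) (hn : 1 ≤ n) (A : Fin m → Fin n → ℝ)
    (hA : ∀ i j, A i j ∈ Set.Icc (0:ℝ) 1) (ε : ℝ) (hε : 0 < ε)
    (x : Fin m → ℝ) (hx : x ∈ simplex m)
    (k : ℕ) (hk : k = ⌈Real.log (2 * n) / (2 * ε ^ 2)⌉₊) :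
    ∃ xb ∈ simplex m, (∀ i, ∃ c : ℕ, xb i = (c : ℝ) / k) ∧
      ∀ j, |mixU A x j - mixU A xb j| ≤ ε := by
  refine k_uniform_approx_general hA hε hx (hk ▸ ceil_log_two_mul_div_ne_zero hn hε) ?_
  simpa [hk] using Nat.le_ceil (Real.log (2 * n) / (2 * ε ^ 2))
end
end

section
/- Let u_l, u_f, ũ_f : [m]×[n] → [0,1] be utility matrices with ‖ũ_f − u_f‖_∞ ≤ ε (entrywise), and let δ > 0. Then the robust Stackelberg values satisfy sup_{x ∈ Δ^m} min_{j ∈ BR_δ(x; u_f)} u_l(x, j) ≥ sup_{x ∈ Δ^m} min_{j ∈ BR_{δ+2ε}(x; ũ_f)} u_l(x, j); that is, V*(u_l, u_f, δ) ≥ V*(u_l, ũ_f, δ + 2ε). -/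
open Finset Set

noncomputable section

/-!
Averaging against a mixed strategy moves every follower payoff by at most `ε`, so the gap between
any two follower payoffs moves by at most `2 * ε`. Hence at each `x` every `δ`-optimal response
for `u_f` is `(δ + 2 * ε)`-optimal for `ũ_f`: enlarging the tolerance gives the leader a minimum
over a larger set, and the suprema over `x` compare accordingly.
-/

section

variable {m n : ℕ} {x : Fin m → ℝ} {γ ε : ℝ}

theorem mixU_sub (u v : Fin m → Fin n → ℝ) (x : Fin m → ℝ) (j : Fin n) :
    mixU (u - v) x j = mixU u x j - mixU v x j := by
  simp only [mixU, Pi.sub_apply, mul_sub, Finset.sum_sub_distrib]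

theorem mixU_mem_of_convex {u : Fin m → Fin n → ℝ} {j : Fin n} {s : Set ℝ} (hs : Convex ℝ s)
    (hx : x ∈ simplex m) (hu : ∀ i, u i j ∈ s) : mixU u x j ∈ s :=
  hs.sum_mem (fun i _ => hx.1 i) hx.2 fun i _ => hu i

theorem abs_mixU_sub_mixU_le {u v : Fin m → Fin n → ℝ} {j : Fin n} (hx : x ∈ simplex m)
    (huv : ∀ i, |u i j - v i j| ≤ ε) : |mixU u x j - mixU v x j| ≤ ε := by
  have hmem : mixU (u - v) x j ∈ Set.Icc (-ε) ε :=
    mixU_mem_of_convex (convex_Icc _ _) hx fun i => abs_le.mp (huv i)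
  rw [← mixU_sub]
  exact abs_le.mpr hmem

theorem mem_BRd_iff_forall {u : Fin m → Fin n → ℝ} {j : Fin n} :
    j ∈ BRd u γ x ↔ ∀ k, mixU u x k - mixU u x j < γ := by
  have : Nonempty (Fin n) := ⟨j⟩
  calc
    j ∈ BRd u γ x ↔ (⨆ k, mixU u x k) < mixU u x j + γ := by
      rw [BRd, Set.mem_ofPred_eq, gt_iff_lt, sub_lt_iff_lt_add]
    _ ↔ ∀ k, mixU u x k < mixU u x j + γ := by
      rw [iSup, (Set.finite_range _).csSup_lt_iff (Set.range_nonempty _), Set.forall_mem_range]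
    _ ↔ ∀ k, mixU u x k - mixU u x j < γ := forall_congr' fun _ => sub_lt_iff_lt_add'.symm

theorem BRd_nonempty_s13 [Nonempty (Fin n)] (u : Fin m → Fin n → ℝ) (hγ : 0 < γ)
    (x : Fin m → ℝ) : (BRd u γ x).Nonempty := by
  obtain ⟨j, hj⟩ := Finite.exists_max (mixU u x)
  exact ⟨j, mem_BRd_iff_forall.mpr fun k => by linarith [hj k]⟩

theorem BRd_subset_BRd_add_two_mul {u v : Fin m → Fin n → ℝ} (hx : x ∈ simplex m)
    (huv : ∀ i j, |u i j - v i j| ≤ ε) : BRd v γ x ⊆ BRd u (γ + 2 * ε) x := by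
  intro j hj
  refine mem_BRd_iff_forall.mpr fun k => ?_
  have hgap : mixU v x k - mixU v x j < γ := mem_BRd_iff_forall.mp hj k
  have hclose (l : Fin n) := abs_le.mp (abs_mixU_sub_mixU_le hx (huv · l))
  linarith [(hclose k).2, (hclose j).1]

theorem valBR_le_valBR_of_BRd_subset {ul u v : Fin m → Fin n → ℝ} {γ' : ℝ}
    (hne : (BRd v γ x).Nonempty) (hsub : BRd v γ x ⊆ BRd u γ' x) :
    valBR ul u γ' x ≤ valBR ul v γ x :=
  csInf_le_csInf (Set.toFinite _).bddBelow (hne.image _) (Set.image_mono hsub)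

theorem bddAbove_valBR_image_simplex (ul uf : Fin m → Fin n → ℝ) (γ : ℝ) :
    BddAbove (valBR ul uf γ '' simplex m) := by
  obtain ⟨M, hM⟩ := (Set.finite_range (Function.uncurry ul)).bddAbove
  -- The `0` covers empty response sets, where `valBR` is `sInf ∅ = 0`.
  refine ⟨max M 0, ?_⟩
  rintro _ ⟨x, hx, rfl⟩
  obtain hempty | ⟨j, hj⟩ := (BRd uf γ x).eq_empty_or_nonempty
  · simp [valBR, hempty]
  · calc
      valBR ul uf γ x ≤ mixU ul x j :=
        csInf_le (Set.toFinite _).bddBelow (Set.mem_image_of_mem _ hj)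
      _ ≤ M := mixU_mem_of_convex (convex_Iic M) hx fun i => hM ⟨(i, j), rfl⟩
      _ ≤ max M 0 := le_max_left _ _

theorem uRSE_le_uRSE_of_forall_valBR_le {n' : ℕ} {ul uf : Fin m → Fin n → ℝ}
    {ul' uf' : Fin m → Fin n' → ℝ} {γ' : ℝ}
    (hval : ∀ x ∈ simplex m, valBR ul uf γ x ≤ valBR ul' uf' γ' x) :
    uRSE ul uf γ ≤ uRSE ul' uf' γ' := by
  have hbdd := bddAbove_valBR_image_simplex ul' uf' γ'
  rw [Set.image_eq_range] at hbdd
  simp only [uRSE, sSup_image']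
  exact ciSup_mono hbdd fun x => hval x x.2

theorem rse_value_perturbation_general {ul uf tuf : Fin m → Fin n → ℝ}
    (hnorm : ∀ i j, |tuf i j - uf i j| ≤ ε) {δ : ℝ} (hδ : 0 < δ) :
    uRSE ul tuf (δ + 2 * ε) ≤ uRSE ul uf δ := by
  refine uRSE_le_uRSE_of_forall_valBR_le fun x hx => ?_
  obtain _ | _ := isEmpty_or_nonempty (Fin n)
  · simp only [valBR, Set.eq_empty_of_isEmpty, le_refl]
  · exact valBR_le_valBR_of_BRd_subset (BRd_nonempty_s13 uf hδ x) (BRd_subset_BRd_add_two_mul hx hnorm)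

end

/-- `V*(u_l, u_f, δ) ≥ V*(u_l, ũ_f, δ + 2ε)` when `‖ũ_f − u_f‖_∞ ≤ ε`. -/
theorem rse_value_perturbation (m n : ℕ) (ul uf tuf : Fin m → Fin n → ℝ)
    (hul : ∀ i j, ul i j ∈ Set.Icc (0:ℝ) 1) (huf : ∀ i j, uf i j ∈ Set.Icc (0:ℝ) 1)
    (htuf : ∀ i j, tuf i j ∈ Set.Icc (0:ℝ) 1)
    (ε : ℝ) (hnorm : ∀ i j, |tuf i j - uf i j| ≤ ε)
    (δ : ℝ) (hδ : 0 < δ) :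
    uRSE ul tuf (δ + 2 * ε) ≤ uRSE ul uf δ :=
  rse_value_perturbation_general hnorm hδ
end
end

section
/- Let u_f : [2]×[n] → [0,1] be a follower utility matrix for a game with m = 2 leader actions, n ≥ 3 follower actions, and inducibility gap Δ > 0, and let δ ∈ (0, Δ). Then for every subset S ⊆ [n] with |S| ≥ 3, there is no leader strategy x ∈ Δ^2 with BR_δ(x) = S; i.e., the δ-best-response region X(δ; S) is empty whenever |S| ≥ 3. -/
open Finset Set

noncomputable section

/-!
If `δ < Δ`, every action `j` has an inducing strategy `y` at which `j` beats all other actions by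
more than `δ`, while at `x` no action beats a `δ`-optimal action `k` by `δ` or more. So on the way
from `x` to `y` the utility of `j` grows strictly more than that of `k`. When `m = 2` the strategies
lie on a segment, and the growth of each utility is its slope times the displacement from `x` to
`y`. Hence the slope of a `δ`-optimal action is either strictly the largest or strictly the smallest
among all `δ`-optimal actions, according to the sign of the displacement, and at most two actions
have this property.
-/

section StrictExtrema

variable {ι R : Type*} {s : Set ι} {f : ι → R}

lemma subsingleton_setOf_forall_ne_lt [Preorder R] :
    {i ∈ s | ∀ k ∈ s, k ≠ i → f k < f i}.Subsingleton := by
  rintro i ⟨hi, hmax_i⟩ j ⟨hj, hmax_j⟩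
  by_contra hij
  exact lt_asymm (hmax_i j hj (Ne.symm hij)) (hmax_j i hi hij)

lemma encard_le_two_of_forall_lt_or_forall_gt [Preorder R]
    (h : ∀ i ∈ s, (∀ k ∈ s, k ≠ i → f k < f i) ∨ (∀ k ∈ s, k ≠ i → f i < f k)) :
    s.encard ≤ 2 := by
  have hcover : s ⊆ {i ∈ s | ∀ k ∈ s, k ≠ i → f k < f i} ∪
      {i ∈ s | ∀ k ∈ s, k ≠ i → f i < f k} :=
    fun i hi => (h i hi).imp (And.intro hi) (And.intro hi)
  have hmax := encard_le_one_iff_subsingleton.2 (subsingleton_setOf_forall_ne_lt (s := s) (f := f))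
  have hmin := encard_le_one_iff_subsingleton.2
    (subsingleton_setOf_forall_ne_lt (s := s) (f := OrderDual.toDual ∘ f))
  exact (encard_le_encard hcover).trans <| (encard_union_le _ _).trans <|
    (add_le_add hmax hmin).trans_eq one_add_one_eq_two

lemma encard_le_two_of_forall_exists_mul_lt_mul [Ring R] [LinearOrder R] [IsStrictOrderedRing R]
    (h : ∀ i ∈ s, ∃ t, ∀ k ∈ s, k ≠ i → f k * t < f i * t) : s.encard ≤ 2 := by
  refine encard_le_two_of_forall_lt_or_forall_gt (f := f) fun i hi => ?_
  obtain ⟨t, ht⟩ := h i hi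
  rcases le_total 0 t with h_nonneg | h_nonpos
  · exact .inl fun k hk hki => lt_of_mul_lt_mul_right (ht k hk hki) h_nonneg
  · exact .inr fun k hk hki => lt_of_mul_lt_mul_of_nonpos_right (ht k hk hki) h_nonpos

end StrictExtrema

section Inducibility

variable {m n : ℕ} {uf : Fin m → Fin n → ℝ} {δ : ℝ} {x : Fin m → ℝ}

lemma exists_forall_lt_mixU_sub_of_lt_indGap [NeZero m] (hδΔ : δ < indGap uf) (j : Fin n) :
    ∃ y ∈ simplex m, ∀ k, k ≠ j → δ < mixU uf y j - mixU uf y k := by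
  have hlt_sup := hδΔ.trans_le (ciInf_le (finite_range _).bddBelow j)
  have hne : (simplex m).Nonempty := ⟨_, single_mem_stdSimplex ℝ 0⟩
  obtain ⟨_, ⟨y, hy, rfl⟩, hlt⟩ := exists_lt_of_lt_csSup (hne.image _) hlt_sup
  refine ⟨y, hy, fun k hk => hlt.trans_le ?_⟩
  exact ciInf_le (f := fun k : {k : Fin n // k ≠ j} => mixU uf y j - mixU uf y k)
    (finite_range _).bddBelow ⟨k, hk⟩

lemma mixU_sub_mixU_lt_of_mem_BRd {k : Fin n} (hk : k ∈ BRd uf δ x) (j : Fin n) :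
    mixU uf x j - mixU uf x k < δ := by
  have hmem : (⨆ j', mixU uf x j') - δ < mixU uf x k := hk
  have hle : mixU uf x j ≤ ⨆ j', mixU uf x j' := le_ciSup (finite_range _).bddAbove j
  linarith

lemma exists_forall_mem_BRd_mixU_sub_lt [NeZero m] (hδΔ : δ < indGap uf) (x : Fin m → ℝ)
    (j : Fin n) :
    ∃ y ∈ simplex m, ∀ k ∈ BRd uf δ x, k ≠ j →
      mixU uf y k - mixU uf x k < mixU uf y j - mixU uf x j := by
  obtain ⟨y, hy, hgap⟩ := exists_forall_lt_mixU_sub_of_lt_indGap hδΔ j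
  refine ⟨y, hy, fun k hk hkj => ?_⟩
  linarith [hgap k hkj, mixU_sub_mixU_lt_of_mem_BRd hk j]

end Inducibility

lemma mixU_sub_mixU_of_mem_simplex_two {n : ℕ} (u : Fin 2 → Fin n → ℝ) {x y : Fin 2 → ℝ}
    (hx : x ∈ simplex 2) (hy : y ∈ simplex 2) (j : Fin n) :
    mixU u y j - mixU u x j = (u 0 j - u 1 j) * (y 0 - x 0) := by
  have hx_sum : x 0 + x 1 = 1 := by simpa only [Fin.sum_univ_two] using hx.2
  have hy_sum : y 0 + y 1 = 1 := by simpa only [Fin.sum_univ_two] using hy.2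
  simp only [mixU, Fin.sum_univ_two]
  linear_combination u 1 j * (hy_sum - hx_sum)

theorem no_large_br_region_general {n : ℕ} {uf : Fin 2 → Fin n → ℝ} {δ : ℝ}
    (hδΔ : δ < indGap uf) {x : Fin 2 → ℝ} (hx : x ∈ simplex 2) :
    (BRd uf δ x).encard ≤ 2 := by
  refine encard_le_two_of_forall_exists_mul_lt_mul (f := fun j => uf 0 j - uf 1 j) fun j _ => ?_
  obtain ⟨y, hy, hgrowth⟩ := exists_forall_mem_BRd_mixU_sub_lt hδΔ x j
  refine ⟨y 0 - x 0, fun k hk hkj => ?_⟩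
  simpa only [mixU_sub_mixU_of_mem_simplex_two uf hx hy] using hgrowth k hk hkj

/-- when `m = 2` and `0 < δ < Δ`, no leader strategy has a δ-optimal
response set of size 3 or more. -/
theorem no_large_br_region (n : ℕ) (hn : 3 ≤ n) (uf : Fin 2 → Fin n → ℝ)
    (huf : ∀ i j, uf i j ∈ Set.Icc (0:ℝ) 1)
    (hΔ : 0 < indGap uf) (δ : ℝ) (hδ : 0 < δ) (hδΔ : δ < indGap uf)
    (S : Set (Fin n)) (hS : 3 ≤ S.ncard) :
    ∀ x ∈ simplex 2, BRd uf δ x ≠ S := by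
  rintro x hx rfl
  have hle : (BRd uf δ x).ncard ≤ 2 :=
    ENat.toNat_le_of_le_natCast (no_large_br_region_general hδΔ hx)
  omega
end
end
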